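/- arXiv:1006.0472 — 4 statements merged into one kernel-verified Lean document; each statement's English description precedes it below -/
import Mathlib

section
/- Let d ≥ 1 and k ≥ 2. Suppose ℤ^d is the disjoint union of k cosets T_1, …, T_k, where each T_j = v_j + L_j with v_j ∈ ℤ^d and L_j a Cartesian subgroup of ℤ^d (i.e., L_j = ∏_{i=1}^d n_{j,i}ℤ for positive integers n_{j,1}, …, n_{j,d}). Then there exist indices j ≠ j' with L_j = L_{j'}, i.e., n_{j,i} = n_{j',i} for all i = 1, …, d. -/
lemma shift_sum (N : ℕ) (f : ℤ → ℂ) (hf : ∀ x, f (x + N) = f x) (m : ℕ) :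
    ∑ x ∈ Finset.range N, f ((x : ℤ) + m) = ∑ x ∈ Finset.range N, f (x : ℤ) := by
  induction m with
  | zero => simp
  | succ m ih =>
    rw [← ih]
    have h1 := Finset.sum_range_succ (fun x : ℕ => f ((x : ℤ) + m)) N
    have h2 := Finset.sum_range_succ' (fun x : ℕ => f ((x : ℤ) + m)) N
    have h3 : f ((N : ℤ) + m) = f (((0 : ℕ) : ℤ) + m) := by
      rw [add_comm, hf]; simp
    rw [h1, h3] at h2
    have h4 := add_right_cancel h2
    rw [h4]
    refine Finset.sum_congr rfl fun x _ => ?_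
    congr 1
    push_cast
    ring

lemma sum_vanish (N m : ℕ) (a : ℤ) (w : ℂ) (hw0 : w ≠ 0) (hmN : m ∣ N) (hwN : w ^ N = 1)
    (hwm : w ^ m ≠ 1) :
    ∑ x ∈ Finset.range N, (if (m : ℤ) ∣ (x : ℤ) - a then w ^ (x : ℤ) else 0) = 0 := by
  have key : ∀ (p : ℕ), m ∣ p → ∀ x : ℤ,
      (if (m : ℤ) ∣ (x + p) - a then w ^ (x + p : ℤ) else 0)
        = w ^ p * (if (m : ℤ) ∣ x - a then w ^ x else 0) := by
    intro p hp x
    have h : (m : ℤ) ∣ (x + p) - a ↔ (m : ℤ) ∣ x - a := by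
      have : x + p - a = (x - a) + p := by ring
      rw [this]
      exact dvd_add_left (by exact_mod_cast hp)
    simp only [h]
    split_ifs
    · rw [zpow_add₀ hw0, zpow_natCast, mul_comm]
    · simp
  have hs := shift_sum N (fun x : ℤ => if (m : ℤ) ∣ x - a then w ^ x else 0)
    (fun x => by simp only [key N hmN x, hwN, one_mul]) m
  simp only [key m dvd_rfl, ← Finset.mul_sum] at hs
  by_contra hne
  exact hwm (mul_right_cancel₀ hne (by rw [hs, one_mul]))

lemma sum_nonvanish (N m : ℕ) (hN : 0 < N) (a : ℤ) (w : ℂ) (hw0 : w ≠ 0) (hm : 0 < m)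
    (hmN : m ∣ N) (hwm : w ^ m = 1) :
    ∑ x ∈ Finset.range N, (if (m : ℤ) ∣ (x : ℤ) - a then w ^ (x : ℤ) else 0) ≠ 0 := by
  have h : ∀ x ∈ Finset.range N, (if (m : ℤ) ∣ (x : ℤ) - a then w ^ (x : ℤ) else 0)
      = (if (m : ℤ) ∣ (x : ℤ) - a then w ^ a else 0) := by
    intro x _
    split_ifs with hd
    · obtain ⟨c, hc⟩ := hd
      have : (x : ℤ) = a + m * c := by linarith
      rw [this, zpow_add₀ hw0, zpow_mul, zpow_natCast, hwm]; simp
    · rfl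
  rw [Finset.sum_congr rfl h, ← Finset.sum_filter, Finset.sum_const, nsmul_eq_mul]
  refine mul_ne_zero ?_ (zpow_ne_zero _ hw0)
  rw [Nat.cast_ne_zero, Finset.card_ne_zero]
  have hm' : (m : ℤ) ≠ 0 := by exact_mod_cast hm.ne'
  refine ⟨(a % m).toNat, ?_⟩
  have h0 := Int.emod_nonneg a hm'
  have h1 := Int.emod_lt_of_pos a (by exact_mod_cast hm : (0 : ℤ) < m)
  have h2 := Nat.le_of_dvd hN hmN
  rw [Finset.mem_filter, Finset.mem_range, Int.toNat_of_nonneg h0]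
  refine ⟨by omega, ?_⟩
  exact ⟨-(a / m), by have := Int.emod_add_mul_ediv a m; linarith⟩


/-- **Generalized Mirsky–Newman theorem** (two subgroups coincide). If `ℤ^d`
(`d ≥ 1`) is the disjoint union of `k ≥ 2` cosets `T j = v j + ∏ i, (n j i)ℤ`
of Cartesian subgroups, then two of the Cartesian subgroups coincide, i.e.
there are `j ≠ j'` with `n j i = n j' i` for all `i`. -/
theorem tiling_lattices_repeated_subgroup
    (d k : ℕ) (hd : 1 ≤ d) (hk : 2 ≤ k)
    (v : Fin k → (Fin d → ℤ)) (n : Fin k → Fin d → ℕ)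
    (hn : ∀ j i, 0 < n j i)
    (T : Fin k → Set (Fin d → ℤ))
    (hT : ∀ j, T j = {w : Fin d → ℤ | ∀ i, (n j i : ℤ) ∣ (w i - v j i)})
    (hdisj : ∀ j j', j ≠ j' → Disjoint (T j) (T j'))
    (hcover : (⋃ j, T j) = Set.univ) :
    ∃ j j', j ≠ j' ∧ ∀ i, n j i = n j' i := by

  classical
  by_contra hcon
  push Not at hcon
  haveI : Nonempty (Fin k) := ⟨⟨0, by omega⟩⟩
  obtain ⟨j0, hj0⟩ := Finite.exists_max (fun j => ∏ i, n j i)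
  have hnd : ∀ j, j ≠ j0 → ∃ i, ¬ n j0 i ∣ n j i := by
    intro j hj
    by_contra hc
    push Not at hc
    obtain ⟨i, hi⟩ := hcon j j0 hj
    have : ∏ i, n j0 i < ∏ i, n j i := by
      refine Finset.prod_lt_prod (fun i _ => hn j0 i)
        (fun i _ => Nat.le_of_dvd (hn j i) (hc i)) ⟨i, Finset.mem_univ _, ?_⟩
      exact lt_of_le_of_ne (Nat.le_of_dvd (hn j i) (hc i)) (Ne.symm hi)
    exact absurd (hj0 j) (not_le.mpr this)
  set N : ℕ := ∏ j, ∏ i, n j i with hNdef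
  have hN : 0 < N := Finset.prod_pos fun j _ => Finset.prod_pos fun i _ => hn j i
  have hdN : ∀ j i, n j i ∣ N := fun j i =>
    (Finset.dvd_prod_of_mem (fun i => n j i) (Finset.mem_univ i)).trans
      (Finset.dvd_prod_of_mem (fun j => ∏ i, n j i) (Finset.mem_univ j))
  obtain ⟨w, hw⟩ : ∃ w : Fin d → ℂ, ∀ i, IsPrimitiveRoot (w i) (n j0 i) :=
    ⟨fun i => _, fun i => Complex.isPrimitiveRoot_exp (n j0 i) (hn j0 i).ne'⟩
  have hw0 : ∀ i, w i ≠ 0 := fun i => (hw i).ne_zero (hn j0 i).ne'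
  have hwN : ∀ i, w i ^ N = 1 := fun i => ((hw i).pow_eq_one_iff_dvd N).2 (hdN j0 i)
  have hind : ∀ x : Fin d → ℕ,
      ∑ j, ∏ i, (if (n j i : ℤ) ∣ (x i : ℤ) - v j i then w i ^ (x i : ℤ) else 0)
        = ∏ i, w i ^ (x i : ℤ) := by
    intro x
    have hx : (fun i => (x i : ℤ)) ∈ ⋃ j, T j := by rw [hcover]; trivial
    obtain ⟨j, hj⟩ := Set.mem_iUnion.1 hx
    rw [Finset.sum_eq_single j]
    · rw [hT] at hj
      exact Finset.prod_congr rfl fun i _ => if_pos (hj i)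
    · intro j' _ hne
      have hnot : (fun i => (x i : ℤ)) ∉ T j' := fun h =>
        Set.disjoint_left.1 (hdisj j' j hne) h hj
      rw [hT, Set.mem_setOf_eq] at hnot
      push Not at hnot
      obtain ⟨i, hi⟩ := hnot
      exact Finset.prod_eq_zero (Finset.mem_univ i) (if_neg hi)
    · simp
  have hmain : ∑ j, ∏ i, ∑ x ∈ Finset.range N,
      (if (n j i : ℤ) ∣ (x : ℤ) - v j i then w i ^ (x : ℤ) else 0)
        = ∏ i, ∑ x ∈ Finset.range N, w i ^ (x : ℤ) := by
    simp only [Finset.prod_univ_sum]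
    rw [Finset.sum_comm]
    exact Finset.sum_congr rfl fun x _ => hind x
  rw [Finset.sum_eq_single j0] at hmain
  · obtain ⟨j, hj⟩ : ∃ j : Fin k, j ≠ j0 := by
      haveI : Nontrivial (Fin k) := Fin.nontrivial_iff_two_le.2 hk
      exact exists_ne j0
    obtain ⟨i, hi⟩ := hnd j hj
    have h1 : w i ^ 1 ≠ 1 := fun h => hi
      ((((hw i).pow_eq_one_iff_dvd 1).1 h).trans (one_dvd _))
    have h2 := sum_vanish N 1 0 (w i) (hw0 i) (one_dvd _) (hwN i) h1
    simp only [Nat.cast_one, isUnit_one, IsUnit.dvd, if_true] at h2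
    have hmain := hmain.trans (Finset.prod_eq_zero (Finset.mem_univ i) h2)
    exact Finset.prod_ne_zero_iff.2 (fun i _ => sum_nonvanish N (n j0 i) hN (v j0 i) (w i) (hw0 i)
      (hn j0 i) (hdN j0 i) (hw i).pow_eq_one) hmain
  · intro j _ hj
    obtain ⟨i, hi⟩ := hnd j hj
    exact Finset.prod_eq_zero (Finset.mem_univ i) (sum_vanish N (n j i) (v j i) (w i) (hw0 i)
      (hdN j i) (hwN i) fun h => hi (((hw i).pow_eq_one_iff_dvd _).1 h))
  · simp
end

section
/- Let d ≥ 1 and k ≥ 2. Suppose ℤ^d is the disjoint union of k cosets T_1, …, T_k of Cartesian subgroups of ℤ^d. Then there exist indices j ≠ j' and a vector w ∈ ℤ^d such that T_j = w + T_{j'}, i.e., T_j is a translate of T_{j'}. -/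
open Finset in
lemma shift_sum_aux (N : ℕ) (f : ℕ → ℂ) (hf : ∀ t, f (t + N) = f t) (n : ℕ) :
    ∑ t ∈ range N, f (t + n) = ∑ t ∈ range N, f t := by
  induction n with
  | zero => simp
  | succ n ih =>
    rw [← ih]
    have h1 := Finset.sum_range_succ (fun t => f (t + n)) N
    have h2 := Finset.sum_range_succ' (fun t => f (t + n)) N
    have h3 : f (N + n) = f (0 + n) := by rw [add_comm N n, hf, zero_add]
    have h4 : ∀ t, t + 1 + n = t + (n + 1) := fun t => by ring
    simp only [h4] at h2
    rw [h1, h3] at h2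
    exact (add_right_cancel h2).symm

open Finset in
lemma coset_sum_zero (N n m : ℕ) (v : ℤ) (ζ : ℂ) (hζ : IsPrimitiveRoot ζ m)
    (hnN : n ∣ N) (hmN : m ∣ N) (hmn : ¬ m ∣ n) :
    ∑ t ∈ range N, (if (n : ℤ) ∣ ((t : ℤ) - v) then ζ ^ t else 0) = 0 := by
  have hN : ζ ^ N = 1 := (hζ.pow_eq_one_iff_dvd N).2 hmN
  have key := shift_sum_aux N (fun t => if (n : ℤ) ∣ ((t : ℤ) - v) then ζ ^ t else 0) (by
    intro t
    have : ((n : ℤ) ∣ (((t + N : ℕ) : ℤ) - v)) ↔ (n : ℤ) ∣ ((t : ℤ) - v) := by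
      have e : (((t + N : ℕ) : ℤ) - v) = ((t : ℤ) - v) + N := by push_cast; ring
      rw [e]
      exact dvd_add_left (Int.natCast_dvd_natCast.2 hnN)
    simp only [this, pow_add, hN, mul_one]) n
  have h2 : ∀ t : ℕ, (if (n : ℤ) ∣ (((t + n : ℕ) : ℤ) - v) then ζ ^ (t + n) else 0)
      = ζ ^ n * (if (n : ℤ) ∣ ((t : ℤ) - v) then ζ ^ t else 0) := by
    intro t
    have : ((n : ℤ) ∣ (((t + n : ℕ) : ℤ) - v)) ↔ (n : ℤ) ∣ ((t : ℤ) - v) := by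
      have e : (((t + n : ℕ) : ℤ) - v) = ((t : ℤ) - v) + n := by push_cast; ring
      rw [e]
      exact dvd_add_left (dvd_refl _)
    simp only [this, pow_add, mul_ite, mul_zero, mul_comm]
  simp only [h2] at key
  rw [← Finset.mul_sum] at key
  have h3 : ζ ^ n ≠ 1 := fun h => hmn ((hζ.pow_eq_one_iff_dvd n).1 h)
  by_contra h0
  exact h3 (mul_right_cancel₀ h0 (by rw [key, one_mul]))

open Finset in
lemma coset_sum_ne_zero (N n : ℕ) (v : ℤ) (ζ : ℂ) (hζ : IsPrimitiveRoot ζ n)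
    (hn : 0 < n) (hN : 0 < N) (hnN : n ∣ N) :
    ∑ t ∈ range N, (if (n : ℤ) ∣ ((t : ℤ) - v) then ζ ^ t else 0) ≠ 0 := by
  have hn' : (0 : ℤ) < n := by exact_mod_cast hn
  obtain ⟨r, hr⟩ := Int.eq_ofNat_of_zero_le (Int.emod_nonneg v hn'.ne')
  have hrn : r < n := by
    have := Int.emod_lt_of_pos v hn'
    omega
  have hdv : ∀ t : ℕ, (n : ℤ) ∣ ((t : ℤ) - v) → ζ ^ t = ζ ^ r := by
    intro t ht
    have h1 : (t : ℤ) % n = v % n := Int.ModEq.symm (Int.modEq_iff_dvd.2 ht)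
    have h2 : t % n = r := by
      rw [hr] at h1; exact_mod_cast h1
    rw [← h2, ← Nat.mod_add_div t n, pow_add, pow_mul, hζ.pow_eq_one]
    simp
  have h1 : ∀ t ∈ range N, (if (n : ℤ) ∣ ((t : ℤ) - v) then ζ ^ t else 0)
      = ζ ^ r * (if (n : ℤ) ∣ ((t : ℤ) - v) then 1 else 0) := by
    intro t _
    split_ifs with h
    · rw [hdv t h, mul_one]
    · simp
  rw [Finset.sum_congr rfl h1, ← Finset.mul_sum]
  refine mul_ne_zero (pow_ne_zero _ (hζ.ne_zero hn.ne')) ?_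
  rw [Finset.sum_boole]
  rw [Nat.cast_ne_zero]
  refine Finset.card_ne_zero_of_mem (a := r) ?_
  rw [Finset.mem_filter]
  refine ⟨Finset.mem_range.2 (lt_of_lt_of_le hrn (Nat.le_of_dvd hN hnN)), ?_⟩
  have : (r : ℤ) % n = v % n := by rw [hr]; exact Int.ofNat_inj.2 (Nat.mod_eq_of_lt hrn)
  exact Int.ModEq.dvd (Int.ModEq.symm this)


/-- **Generalized Mirsky–Newman theorem** (translate form). If `ℤ^d` (`d ≥ 1`)
is the disjoint union of `k ≥ 2` cosets of Cartesian subgroups, then one of the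
cosets is a translate of another. -/
theorem tiling_lattices_translate
    (d k : ℕ) (hd : 1 ≤ d) (hk : 2 ≤ k)
    (v : Fin k → (Fin d → ℤ)) (n : Fin k → Fin d → ℕ)
    (hn : ∀ j i, 0 < n j i)
    (T : Fin k → Set (Fin d → ℤ))
    (hT : ∀ j, T j = {w : Fin d → ℤ | ∀ i, (n j i : ℤ) ∣ (w i - v j i)})
    (hdisj : ∀ j j', j ≠ j' → Disjoint (T j) (T j'))
    (hcover : (⋃ j, T j) = Set.univ) :
    ∃ j j', j ≠ j' ∧ ∃ w : Fin d → ℤ, T j = (fun x => w + x) '' T j' := by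

  classical
  have hinst : Nonempty (Fin k) := ⟨⟨0, by omega⟩⟩
  suffices h : ∃ j j', j ≠ j' ∧ n j = n j' by
    obtain ⟨j, j', hne, h⟩ := h
    refine ⟨j, j', hne, v j - v j', ?_⟩
    rw [hT, hT, h]
    ext x
    simp only [Set.mem_setOf_eq, Set.mem_image]
    constructor
    · intro hx
      refine ⟨x - (v j - v j'), fun i => ?_, by simp⟩
      have e : (x - (v j - v j')) i - v j' i = x i - v j i := by
        simp only [Pi.sub_apply]; ring
      rw [e]; exact hx i
    · rintro ⟨y, hy, rfl⟩ i
      have e : (v j - v j' + y) i - v j i = y i - v j' i := by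
        simp only [Pi.sub_apply, Pi.add_apply]; ring
      rw [e]; exact hy i
  by_contra hcon
  push Not at hcon
  obtain ⟨j0, hj0⟩ := Finite.exists_max (fun j => ∑ i, n j i)
  have hmax : ∀ j, (∀ i, n j0 i ∣ n j i) → j = j0 := by
    intro j hj
    by_contra hne
    refine hcon j j0 hne ?_
    have hle : ∀ i ∈ Finset.univ, n j0 i ≤ n j i := fun i _ => Nat.le_of_dvd (hn j i) (hj i)
    have := (Finset.sum_eq_sum_iff_of_le hle).1 (le_antisymm (Finset.sum_le_sum hle) (hj0 j))
    funext i
    exact (this i (Finset.mem_univ i)).symm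
  have hself : ∀ j, v j ∈ T j := by
    intro j; rw [hT]; intro i; simp
  -- some modulus of `j0` is not one
  have hone : ∃ i, n j0 i ≠ 1 := by
    by_contra h
    push Not at h
    haveI : Nontrivial (Fin k) := Fin.nontrivial_iff_two_le.2 hk
    obtain ⟨j, hj⟩ := exists_ne j0
    refine Set.disjoint_left.1 (hdisj j j0 hj) (hself j) ?_
    rw [hT]
    intro i
    simp [h i]
  obtain ⟨N, hN, hdvd⟩ : ∃ N : ℕ, 0 < N ∧ ∀ j i, n j i ∣ N := by
    refine ⟨∏ j, ∏ i, n j i, Finset.prod_pos fun j _ => Finset.prod_pos fun i _ => hn j i, ?_⟩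
    intro j i
    exact (Finset.dvd_prod_of_mem (fun i => n j i) (Finset.mem_univ i)).trans
      (Finset.dvd_prod_of_mem (fun j => ∏ i, n j i) (Finset.mem_univ j))
  have hζ : ∀ i, ∃ ζ : ℂ, IsPrimitiveRoot ζ (n j0 i) := fun i =>
    ⟨_, Complex.isPrimitiveRoot_exp _ (hn j0 i).ne'⟩
  choose ζ hζ using hζ
  -- pointwise identity
  have hpt : ∀ x : Fin d → ℕ, ∑ j, ∏ i,
      (if (n j i : ℤ) ∣ ((x i : ℤ) - v j i) then ζ i ^ x i else 0) = ∏ i, ζ i ^ x i := by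
    intro x
    have hx : (fun i => (x i : ℤ)) ∈ ⋃ j, T j := by rw [hcover]; trivial
    obtain ⟨j, hj⟩ := Set.mem_iUnion.1 hx
    rw [Finset.sum_eq_single j]
    · rw [hT] at hj
      exact Finset.prod_congr rfl fun i _ => if_pos (hj i)
    · intro j' _ hne
      have hnot : (fun i => (x i : ℤ)) ∉ T j' := fun h =>
        Set.disjoint_left.1 (hdisj j' j hne) h hj
      rw [hT] at hnot
      simp only [Set.mem_setOf_eq, not_forall] at hnot
      obtain ⟨i, hi⟩ := hnot
      exact Finset.prod_eq_zero (Finset.mem_univ i) (if_neg hi)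
    · intro h; exact absurd (Finset.mem_univ j) h
  have hsum : ∑ j, ∏ i, ∑ t ∈ Finset.range N,
      (if (n j i : ℤ) ∣ ((t : ℤ) - v j i) then ζ i ^ t else 0)
      = ∏ i, ∑ t ∈ Finset.range N, ζ i ^ t := by
    simp only [Finset.prod_univ_sum]
    rw [Finset.sum_comm]
    exact Finset.sum_congr rfl fun x _ => hpt x
  have hR : ∏ i, ∑ t ∈ Finset.range N, ζ i ^ t = 0 := by
    obtain ⟨i, hi⟩ := hone
    refine Finset.prod_eq_zero (Finset.mem_univ i) ?_
    have := coset_sum_zero N 1 (n j0 i) 0 (ζ i) (hζ i) (one_dvd _) (hdvd j0 i)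
      (by rwa [Nat.dvd_one])
    simpa using this
  rw [hR, Finset.sum_eq_single j0] at hsum
  · refine Finset.prod_ne_zero_iff.2 (fun i _ => ?_) hsum
    exact coset_sum_ne_zero N (n j0 i) (v j0 i) (ζ i) (hζ i) (hn j0 i) hN (hdvd j0 i)
  · intro j _ hne
    have : ¬ ∀ i, n j0 i ∣ n j i := fun h => hne (hmax j h)
    push Not at this
    obtain ⟨i, hi⟩ := this
    exact Finset.prod_eq_zero (Finset.mem_univ i)
      (coset_sum_zero N (n j i) (n j0 i) (v j i) (ζ i) (hζ i) (hdvd j i) (hdvd j0 i) hi)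
  · intro h; exact absurd (Finset.mem_univ j0) h
end

section
/- (Mirsky–Newman, d = 1 case.) Let k ≥ 2 and suppose ℤ is the disjoint union of k arithmetic progressions a_1 + n_1ℤ, …, a_k + n_kℤ with each n_j a positive integer. Then there exist indices j ≠ j' with n_j = n_{j'}. -/
lemma sum_shift_zero {N : ℕ} [NeZero N] (f : ZMod N → ℂ) (c : ZMod N) (w : ℂ) (hw : w ≠ 1)
    (h : ∀ x, f (x + c) = w * f x) : ∑ x, f x = 0 := by
  have h1 : ∑ x, f (x + c) = ∑ x, f x := Equiv.sum_comp (Equiv.addRight c) f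
  simp only [h, ← Finset.mul_sum] at h1
  have h2 : (w - 1) * ∑ x, f x = 0 := by linear_combination h1
  exact (mul_eq_zero.mp h2).resolve_left (sub_ne_zero.mpr hw)

/-- **Mirsky–Newman theorem** (the case `d = 1`). If `ℤ` is the disjoint union
of `k ≥ 2` arithmetic progressions `a j + (n j)ℤ` with each `n j` a positive
integer, then two of the differences coincide. -/
theorem mirsky_newman
    (k : ℕ) (hk : 2 ≤ k)
    (a : Fin k → ℤ) (n : Fin k → ℕ) (hn : ∀ j, 0 < n j)
    (hdisj : ∀ j j', j ≠ j' →
      Disjoint {x : ℤ | (n j : ℤ) ∣ (x - a j)} {x : ℤ | (n j' : ℤ) ∣ (x - a j')})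
    (hcover : (⋃ j, {x : ℤ | (n j : ℤ) ∣ (x - a j)}) = Set.univ) :
    ∃ j j', j ≠ j' ∧ n j = n j' := by
  classical
  by_contra! hne
  have : Nonempty (Fin k) := ⟨⟨0, by omega⟩⟩
  obtain ⟨m, hm⟩ := Finite.exists_max n
  have hlt : ∀ j, j ≠ m → n j < n m := fun j hj => lt_of_le_of_ne (hm j) (hne j m hj)
  have hM : 1 < n m := by
    obtain ⟨j, hj⟩ : ∃ j : Fin k, j ≠ m := by
      have : Nontrivial (Fin k) := Fin.nontrivial_iff_two_le.mpr hk
      exact exists_ne m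
    have := hlt j hj
    have := hn j
    omega
  obtain ⟨N, hN⟩ : ∃ N, N = ∏ j, n j := ⟨_, rfl⟩
  have hdvd : ∀ j, n j ∣ N := fun j => hN ▸ Finset.dvd_prod_of_mem n (Finset.mem_univ j)
  have hN0 : N ≠ 0 := hN ▸ Finset.prod_ne_zero_iff.mpr fun j _ => (hn j).ne'
  have : NeZero N := ⟨hN0⟩
  obtain ⟨q, hq⟩ := hdvd m
  have hq0 : 0 < q := by
    rcases Nat.eq_zero_or_pos q with h | h
    · simp [h] at hq; exact absurd hq hN0
    · exact h
  let ψ : ZMod N → ℂ := fun x => ZMod.stdAddChar ((q : ZMod N) * x)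
  have ψadd : ∀ x y, ψ (x + y) = ψ y * ψ x := fun x y => by
    simp only [ψ, mul_add, AddChar.map_add_eq_mul]; exact mul_comm _ _
  have ψone : ∀ t : ℤ, ψ (t : ZMod N) = 1 ↔ (n m : ℤ) ∣ t := fun t => by
    have h1 : ψ (t : ZMod N) = 1 ↔ (q : ZMod N) * (t : ZMod N) = 0 := by
      rw [← (ZMod.injective_stdAddChar (N := N)).eq_iff, AddChar.map_zero_eq_one]
    have h2 : (q : ZMod N) * (t : ZMod N) = (((q : ℤ) * t : ℤ) : ZMod N) := by push_cast; rfl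
    rw [h1, h2, ZMod.intCast_zmod_eq_zero_iff_dvd, hq, Nat.cast_mul, mul_comm (n m : ℤ)]
    exact mul_dvd_mul_iff_left (by exact_mod_cast hq0.ne')
  have ψne : ∀ x, ψ x ≠ 0 := fun x => by
    intro h
    have := ψadd x (-x)
    rw [h, mul_zero, add_neg_cancel] at this
    simp [ψ] at this
  let P : Fin k → ZMod N → Prop := fun j x => ZMod.castHom (hdvd j) (ZMod (n j)) x = (a j : ZMod (n j))
  have hP : ∀ j (z : ℤ), P j (z : ZMod N) ↔ (n j : ℤ) ∣ z - a j := fun j z => by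
    simp only [P, map_intCast]
    rw [eq_comm, ZMod.intCast_eq_intCast_iff_dvd_sub]
  have hpart : ∀ x, ψ x = ∑ j, if P j x then ψ x else 0 := fun x => by
    obtain ⟨z, rfl⟩ := ZMod.intCast_surjective x
    have hz : z ∈ ⋃ j, {x : ℤ | (n j : ℤ) ∣ (x - a j)} := hcover ▸ Set.mem_univ z
    obtain ⟨j, hj⟩ := Set.mem_iUnion.mp hz
    rw [Finset.sum_eq_single j, if_pos ((hP j z).mpr hj)]
    · intro i _ hi
      rw [if_neg]
      intro h
      exact Set.disjoint_left.mp (hdisj i j hi) ((hP i z).mp h) hj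
    · simp
  have htot : ∑ x, ψ x = 0 := by
    refine sum_shift_zero ψ 1 (ψ 1) ?_ (fun x => ψadd x 1)
    intro h
    have := (ψone 1).mp (by simpa using h)
    have := Int.le_of_dvd one_pos this
    omega
  have hz : ∀ j, j ≠ m → ∑ x, (if P j x then ψ x else 0) = 0 := fun j hj => by
    refine sum_shift_zero _ (n j : ZMod N) (ψ (n j : ZMod N)) ?_ (fun x => ?_)
    · intro h
      have := (ψone (n j)).mp (by simpa using h)
      have := Int.le_of_dvd (by exact_mod_cast hn j) this
      have := hlt j hj
      omega
    · have : P j (x + (n j : ZMod N)) ↔ P j x := by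
        simp only [P, map_add, map_natCast, CharP.cast_eq_zero, add_zero]
      simp only [this, ψadd, mul_ite, mul_zero]
  have hmm : ∀ x, (if P m x then ψ x else 0) = if P m x then ψ (a m : ZMod N) else 0 := fun x => by
    obtain ⟨z, rfl⟩ := ZMod.intCast_surjective x
    split_ifs with h
    · have h1 := (ψone _).mpr ((hP m z).mp h)
      have h2 := ψadd (a m : ZMod N) ((z - a m : ℤ) : ZMod N)
      rw [h1, one_mul] at h2
      rw [← h2]; push_cast; congr 1; ring
    · rfl
  rw [Finset.sum_congr rfl (fun x _ => hpart x), Finset.sum_comm,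
    Finset.sum_eq_single m (fun j _ hj => hz j hj) (by simp),
    Finset.sum_congr rfl (fun x _ => hmm x), ← Finset.sum_filter, Finset.sum_const,
    nsmul_eq_mul] at htot
  rcases mul_eq_zero.mp htot with h | h
  · rw [Nat.cast_eq_zero, Finset.card_eq_zero] at h
    have : (a m : ZMod N) ∈ Finset.univ.filter (fun x => P m x) := by
      simp only [Finset.mem_filter, Finset.mem_univ, true_and]
      rw [hP]; simp
    rw [h] at this
    simp at this
  · exact ψne _ h
end

section
/- Let d ≥ 1, let n_1, …, n_d and n'_1, …, n'_d be positive integers, let m'_i ∈ {0, …, n'_i − 1}, and set ζ_i = e^{2πi/n_i}. If there exists an index i_0 such that n_{i_0} does not divide n'_{i_0}, then lim_{t → 0⁺} t^d · ∏_{i=1}^d ((1−t)ζ_i)^{m'_i} / (1 − ((1−t)ζ_i)^{n'_i}) = 0; that is, the rational function ∏_i x_i^{m'_i}/(1 − x_i^{n'_i}) does not have a pole of order d along the radial approach to the point (ζ_1, …, ζ_d). -/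
open scoped BigOperators Real

lemma tendsto_factor_zero (m k : ℕ) (z : ℂ) (hz : z ^ k ≠ 1) :
    Filter.Tendsto
      (fun t : ℝ => (t : ℂ) * (((1 - (t : ℂ)) * z) ^ m / (1 - ((1 - (t : ℂ)) * z) ^ k)))
      (nhdsWithin 0 (Set.Ioi 0)) (nhds 0) := by
  have hc : ContinuousAt
      (fun t : ℝ => (t : ℂ) * (((1 - (t : ℂ)) * z) ^ m / (1 - ((1 - (t : ℂ)) * z) ^ k))) 0 := by
    refine ContinuousAt.mul (by fun_prop) (ContinuousAt.div (by fun_prop) (by fun_prop) ?_)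
    simpa [sub_eq_zero] using fun h => hz h.symm
  have := hc.tendsto.mono_left (nhdsWithin_le_nhds (s := Set.Ioi 0))
  simpa using this

lemma tendsto_factor_one (m k : ℕ) (hk : 0 < k) (z : ℂ) (hz : z ^ k = 1) :
    ∃ c : ℂ, Filter.Tendsto
      (fun t : ℝ => (t : ℂ) * (((1 - (t : ℂ)) * z) ^ m / (1 - ((1 - (t : ℂ)) * z) ^ k)))
      (nhdsWithin 0 (Set.Ioi 0)) (nhds c) := by
  have hc : ContinuousAt
      (fun t : ℝ => ((1 - (t : ℂ)) * z) ^ m / ∑ j ∈ Finset.range k, (1 - (t : ℂ)) ^ j) 0 := by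
    refine ContinuousAt.div (by fun_prop) (by fun_prop) ?_
    simp [hk.ne']
  refine ⟨_, (hc.tendsto.mono_left (nhdsWithin_le_nhds (s := Set.Ioi 0))).congr' ?_⟩
  filter_upwards [self_mem_nhdsWithin] with t ht
  have ht0 : (t : ℂ) ≠ 0 := by exact_mod_cast (ne_of_gt ht)
  have hg : 1 - ((1 - (t : ℂ)) * z) ^ k = t * ∑ j ∈ Finset.range k, (1 - (t : ℂ)) ^ j := by
    have := mul_neg_geom_sum (1 - (t : ℂ)) k
    rw [mul_pow, hz, mul_one, ← this]
    ring
  rw [hg, ← mul_div_assoc, mul_div_mul_left _ _ ht0]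

/-- If some `n i₀` does not divide `n' i₀`, then the rational function
`∏ i, x i ^ m' i / (1 - x i ^ n' i)` has no pole of order `d` along the radial
approach to `(ζ 1, …, ζ d)` where `ζ i = e^{2πi / n i}`:
`t^d` times the function (evaluated at `x i = (1 - t) ζ i`) tends to `0`
as `t → 0⁺`. -/
theorem radial_limit_zero_of_not_dvd
    (d : ℕ) (hd : 1 ≤ d) (n n' : Fin d → ℕ)
    (hn : ∀ i, 0 < n i) (hn' : ∀ i, 0 < n' i)
    (m' : Fin d → ℕ) (hm' : ∀ i, m' i < n' i)
    (ζ : Fin d → ℂ) (hζ : ∀ i, ζ i = Complex.exp (2 * π * Complex.I / n i))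
    (h : ∃ i₀, ¬ n i₀ ∣ n' i₀) :
    Filter.Tendsto
      (fun t : ℝ =>
        (t : ℂ) ^ d *
          ∏ i, ((1 - (t : ℂ)) * ζ i) ^ m' i / (1 - ((1 - (t : ℂ)) * ζ i) ^ n' i))
      (nhdsWithin 0 (Set.Ioi 0)) (nhds 0) := by
  have hex : ∀ i, ∃ c : ℂ, Filter.Tendsto
      (fun t : ℝ => (t : ℂ) * (((1 - (t : ℂ)) * ζ i) ^ m' i /
        (1 - ((1 - (t : ℂ)) * ζ i) ^ n' i)))
      (nhdsWithin 0 (Set.Ioi 0)) (nhds c) ∧ (¬ n i ∣ n' i → c = 0) := by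
    intro i
    have hp : IsPrimitiveRoot (ζ i) (n i) := by
      rw [hζ i]
      exact Complex.isPrimitiveRoot_exp (n i) (hn i).ne'
    by_cases hdvd : n i ∣ n' i
    · obtain ⟨c, hc⟩ := tendsto_factor_one (m' i) (n' i) (hn' i) (ζ i)
        ((hp.pow_eq_one_iff_dvd _).2 hdvd)
      exact ⟨c, hc, fun h => absurd hdvd h⟩
    · exact ⟨0, tendsto_factor_zero (m' i) (n' i) (ζ i)
        (fun h => hdvd ((hp.pow_eq_one_iff_dvd _).1 h)), fun _ => rfl⟩
  choose c hc hc0 using hex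
  obtain ⟨i₀, hi₀⟩ := h
  have hprod := tendsto_finsetProd (Finset.univ : Finset (Fin d)) (fun i _ => hc i)
  rw [Finset.prod_eq_zero (Finset.mem_univ i₀) (hc0 i₀ hi₀)] at hprod
  refine hprod.congr fun t => ?_
  rw [Finset.prod_mul_distrib]
  simp
end
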